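/- arXiv:2207.05445 — 2 statements merged into one kernel-verified Lean document; each statement's English description precedes it below -/
import Mathlib

section
/- Gâteaux derivative of the energy functional: Let p ∈ (1,∞) and V ⊆ X. For every φ ∈ D and every ψ ∈ C_c(V), one has φ + tψ ∈ D for all t ∈ ℝ, and the map t ↦ h(φ + tψ) is differentiable at t = 0 with derivative equal to p·⟨Hφ, ψ⟩_V = p·Σ_{x∈V} Hφ(x)ψ(x)m(x). -/
open scoped BigOperators

/-- `⟨a⟩_p := |a|^{p-1} · sgn(a)`. -/
noncomputable def pPow (p a : ℝ) : ℝ := |a| ^ (p - 1) * Real.sign a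

/-- `C(V)`: real-valued functions on `X` vanishing outside `V`. -/
def MemC {X : Type*} (V : Set X) (f : X → ℝ) : Prop := ∀ x ∉ V, f x = 0

/-- `C_c(V)`: finitely supported functions with support contained in `V`. -/
def MemCc {X : Type*} (V : Set X) (f : X → ℝ) : Prop :=
  (Function.support f).Finite ∧ ∀ x ∉ V, f x = 0

/-- The formal space `F(V)`. -/
def MemF {X : Type*} (b : X → X → ℝ) (p : ℝ) (V : Set X) (f : X → ℝ) : Prop :=
  ∀ x ∈ V, Summable fun y => b x y * |f y| ^ (p - 1)

/-- The domain `D` of the energy functional. -/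
def MemD {X : Type*} (b : X → X → ℝ) (c : X → ℝ) (p : ℝ) (f : X → ℝ) : Prop :=
  (Summable fun z : X × X => b z.1 z.2 * |f z.1 - f z.2| ^ p) ∧
  (Summable fun x => |c x| * |f x| ^ p)

/-- The `p`-energy functional `h`. -/
noncomputable def energy {X : Type*} (b : X → X → ℝ) (c : X → ℝ) (p : ℝ) (f : X → ℝ) : ℝ :=
  (1 / 2) * ∑' z : X × X, b z.1 z.2 * |f z.1 - f z.2| ^ p + ∑' x, c x * |f x| ^ p

/-- The `p`-Schrödinger operator `H`. -/
noncomputable def HOp {X : Type*} (m : X → ℝ) (b : X → X → ℝ) (c : X → ℝ) (p : ℝ)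
    (f : X → ℝ) (x : X) : ℝ :=
  (1 / m x) * ∑' y, b x y * pPow p (f x - f y) + (c x / m x) * pPow p (f x)

/-- The `p`-Laplacian `L` (i.e. `H` with potential `0`). -/
noncomputable def LOp {X : Type*} (m : X → ℝ) (b : X → X → ℝ) (p : ℝ)
    (f : X → ℝ) (x : X) : ℝ :=
  (1 / m x) * ∑' y, b x y * pPow p (f x - f y)

/-- `(X, m, b)` is a weighted graph. -/
def IsGraph {X : Type*} (m : X → ℝ) (b : X → X → ℝ) : Prop :=
  (∀ x, 0 < m x) ∧ (∀ x y, 0 ≤ b x y) ∧ (∀ x y, b x y = b y x) ∧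
  (∀ x, b x x = 0) ∧ (∀ x, Summable fun y => b x y)

/-- A set `V` is connected w.r.t. the graph: any two of its vertices are joined by a
path of neighbours inside `V`. -/
def ConnectedIn {X : Type*} (b : X → X → ℝ) (V : Set X) : Prop :=
  ∀ x ∈ V, ∀ y ∈ V, Relation.ReflTransGen (fun u v => u ∈ V ∧ v ∈ V ∧ 0 < b u v) x y

/-- The (outer) boundary `∂V`. -/
def bdry {X : Type*} (b : X → X → ℝ) (V : Set X) : Set X :=
  {y | y ∉ V ∧ ∃ z ∈ V, 0 < b y z}

/-- `u` is harmonic on `V` (w.r.t. `H`). -/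
def HarmonicOn {X : Type*} (m : X → ℝ) (b : X → X → ℝ) (c : X → ℝ) (p : ℝ)
    (V : Set X) (u : X → ℝ) : Prop := ∀ x ∈ V, HOp m b c p u x = 0

/-- `u` is superharmonic on `V` (w.r.t. `H`). -/
def SuperharmonicOn {X : Type*} (m : X → ℝ) (b : X → X → ℝ) (c : X → ℝ) (p : ℝ)
    (V : Set X) (u : X → ℝ) : Prop := ∀ x ∈ V, 0 ≤ HOp m b c p u x

/-- `h` is non-negative on `C_c(V)`. -/
def EnergyNonneg {X : Type*} (b : X → X → ℝ) (c : X → ℝ) (p : ℝ) (V : Set X) : Prop :=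
  ∀ φ : X → ℝ, MemCc V φ → 0 ≤ energy b c p φ

/-- `h` is subcritical in `V`: a Hardy inequality holds. -/
def Subcritical {X : Type*} (b : X → X → ℝ) (c : X → ℝ) (p : ℝ) (V : Set X) : Prop :=
  ∃ w : X → ℝ, (∀ x, 0 ≤ w x) ∧ w ≠ 0 ∧
    ∀ φ : X → ℝ, MemCc V φ → (∑' x, |φ x| ^ p * w x) ≤ energy b c p φ

/-- `h` is critical in `V`. -/
def Critical {X : Type*} (b : X → X → ℝ) (c : X → ℝ) (p : ℝ) (V : Set X) : Prop :=
  EnergyNonneg b c p V ∧ ¬ Subcritical b c p V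

/-- The bottom of the spectrum / variational constant `λ₀(V)`. -/
noncomputable def lam0 {X : Type*} (m : X → ℝ) (b : X → X → ℝ) (c : X → ℝ) (p : ℝ)
    (V : Set X) : ℝ :=
  sInf {r : ℝ | ∃ φ : X → ℝ, MemCc V φ ∧ φ ≠ 0 ∧
    r = energy b c p φ / ∑' x, |φ x| ^ p * m x}

/-- The variational `p`-capacity `cap_h(x, V)`. -/
noncomputable def capH {X : Type*} (b : X → X → ℝ) (c : X → ℝ) (p : ℝ)
    (V : Set X) (x : X) : ℝ :=
  sInf {r : ℝ | ∃ φ : X → ℝ, MemCc V φ ∧ φ x = 1 ∧ r = energy b c p φ}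

/-- The weighted bracket `⟨f, g⟩_V = Σ_{x ∈ V} f(x) g(x) m(x)`. -/
noncomputable def bracket {X : Type*} (m : X → ℝ) (V : Set X) (f g : X → ℝ) : ℝ :=
  ∑' x, Set.indicator V (fun x => f x * g x * m x) x

/-- `u ∈ M(V ∖ K)`: positive harmonic function of minimal growth in a neighbourhood of
infinity in `V` (harmonic on `V∖K`, positive on `V ∪ ∂V`). -/
def MemM {X : Type*} (m : X → ℝ) (b : X → X → ℝ) (c : X → ℝ) (p : ℝ)
    (V K : Set X) (u : X → ℝ) : Prop :=
  HarmonicOn m b c p (V \ K) u ∧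
  (∀ x ∈ V ∪ bdry b V, 0 ≤ u x) ∧ (∃ x ∈ V ∪ bdry b V, u x ≠ 0) ∧
  ∀ K' : Set X, K ⊆ K' → K' ⊆ V → K'.Finite → ConnectedIn b K' →
    ∀ v : X → ℝ, MemF b p (V \ K') v →
      (∀ x ∈ V \ K', 0 ≤ v x) → (∃ x ∈ V \ K', v x ≠ 0) →
      SuperharmonicOn m b c p (V \ K') v →
      (∀ x ∈ K', u x ≤ v x) → ∀ x ∈ V \ K', u x ≤ v x

/-- `u` is a normalised Green's function in `V` at `o`. -/
def IsNormalisedGreen {X : Type*} (m : X → ℝ) (b : X → X → ℝ) (c : X → ℝ) (p : ℝ)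
    (V : Set X) (o : X) (u : X → ℝ) : Prop :=
  MemM m b c p V {o} u ∧ MemF b p V u ∧ HOp m b c p u o ≠ 0 ∧
  ∀ x ∈ V, HOp m b c p u x = Set.indicator {o} (fun _ => (1:ℝ)) x

/-!
The energy is a sum of two series of the form `∑ᵢ wᵢ |fᵢ|^p`, over the pairs of vertices with weight
`b` and over the vertices with weight `c`. Along `f + t g` such a series may be differentiated
termwise at `t = 0`: for `|t| ≤ 1` both `|fᵢ + t gᵢ|` and `|gᵢ|` are at most `|fᵢ| + |gᵢ|`, so the
derivatives are dominated by `p |wᵢ| (|fᵢ| + |gᵢ|)^p`, which is summable because `ℓ^p` is a vector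
space. The resulting expression is linear in `ψ` and becomes `⟨Hφ, ψ⟩_V` on summing by parts, since
the flow `b(x, y) ⟨∇_{x,y} φ⟩_p` is antisymmetric in `(x, y)`. A finitely supported `ψ` lies in the
`ℓ^p`-spaces weighted by `deg` and by `|c|`, where all these series converge absolutely.
-/

section SignedPower

variable {p : ℝ}

theorem pPow_neg (p a : ℝ) : pPow p (-a) = -pPow p a := by
  simp only [pPow, abs_neg, Real.sign_neg, mul_neg]

theorem abs_pPow_le (p a : ℝ) : |pPow p a| ≤ |a| ^ (p - 1) := by
  have hsign : |Real.sign a| ≤ 1 := by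
    rcases Real.sign_apply_eq a with h | h | h <;> simp [h]
  rw [pPow, abs_mul, Real.abs_rpow_of_nonneg (abs_nonneg a), abs_abs]
  exact mul_le_of_le_one_right (by positivity) hsign

theorem abs_rpow_sub_two_mul_self (p a : ℝ) : |a| ^ (p - 2) * a = pPow p a := by
  rcases lt_trichotomy a 0 with ha | rfl | ha
  · rw [pPow, Real.sign_of_neg ha, abs_of_neg ha, show p - 1 = p - 2 + 1 by ring,
      Real.rpow_add_one (neg_pos.mpr ha).ne']
    ring
  · simp [pPow]
  · rw [pPow, Real.sign_of_pos ha, abs_of_pos ha, show p - 1 = p - 2 + 1 by ring,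
      Real.rpow_add_one ha.ne', mul_one]

theorem hasDerivAt_abs_rpow_pPow (hp : 1 < p) (a : ℝ) :
    HasDerivAt (fun x : ℝ => |x| ^ p) (p * pPow p a) a := by
  simpa only [mul_assoc, abs_rpow_sub_two_mul_self] using hasDerivAt_abs_rpow a hp

theorem abs_pPow_mul_le {a g r : ℝ} (hp : 1 ≤ p) (ha : |a| ≤ r) (hg : |g| ≤ r) :
    |pPow p a * g| ≤ r ^ p := by
  have hr : 0 ≤ r := (abs_nonneg a).trans ha
  have hpow : |pPow p a| ≤ r ^ (p - 1) :=
    (abs_pPow_le p a).trans (Real.rpow_le_rpow (abs_nonneg a) ha (sub_nonneg.mpr hp))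
  calc |pPow p a * g| = |pPow p a| * |g| := abs_mul _ _
    _ ≤ r ^ (p - 1) * r := by gcongr
    _ = r ^ p := by
      rw [mul_comm, ← Real.rpow_one_add' hr (by linarith), add_sub_cancel]

theorem abs_pPow_add_mul_mul_le {t : ℝ} (hp : 1 ≤ p) (ht : |t| ≤ 1) (a g : ℝ) :
    |pPow p (a + t * g) * g| ≤ |(|a| + |g|)| ^ p := by
  have hseg : |a + t * g| ≤ |a| + |g| := by
    refine (abs_add_le _ _).trans ?_
    rw [abs_mul]
    gcongr
    exact mul_le_of_le_one_left (abs_nonneg g) ht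
  exact abs_pPow_mul_le hp (hseg.trans (le_abs_self _))
    ((le_add_of_nonneg_left (abs_nonneg a)).trans (le_abs_self _))

end SignedPower

/-- The weighted space `ℓ^p(ι, |w|)`, the common form of both conditions defining `D`. The weight
enters through its absolute value since potentials may change sign. -/
def MemWeightedLp {ι : Type*} (w : ι → ℝ) (p : ℝ) (f : ι → ℝ) : Prop :=
  Summable fun i => |w i| * |f i| ^ p

namespace MemWeightedLp

variable {ι : Type*} {w f g : ι → ℝ} {p : ℝ}

theorem of_finite_support (w : ι → ℝ) (hp : p ≠ 0) (hf : (Function.support f).Finite) :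
    MemWeightedLp w p f := by
  refine summable_of_hasFiniteSupport (hf.subset fun i hi hfi => hi ?_)
  simp only [hfi, abs_zero, Real.zero_rpow hp, mul_zero]

theorem abs (hf : MemWeightedLp w p f) : MemWeightedLp w p fun i => |f i| := by
  simpa only [MemWeightedLp, abs_abs] using hf

theorem const_mul (t : ℝ) (hf : MemWeightedLp w p f) : MemWeightedLp w p fun i => t * f i := by
  refine (hf.mul_left (|t| ^ p)).congr fun i => ?_
  rw [abs_mul, Real.mul_rpow (abs_nonneg t) (abs_nonneg (f i)), mul_left_comm]

theorem add (hp : 1 ≤ p) (hf : MemWeightedLp w p f) (hg : MemWeightedLp w p g) :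
    MemWeightedLp w p fun i => f i + g i := by
  refine Summable.of_nonneg_of_le (fun i => by positivity) (fun i => ?_)
    ((Summable.add hf hg).mul_left (2 ^ (p - 1)))
  have hconvex : (|f i| + |g i|) ^ p ≤ 2 ^ (p - 1) * (|f i| ^ p + |g i| ^ p) := by
    exact_mod_cast NNReal.rpow_add_le_mul_rpow_add_rpow ‖f i‖₊ ‖g i‖₊ hp
  calc |w i| * |f i + g i| ^ p ≤ |w i| * (|f i| + |g i|) ^ p := by
        gcongr
        exact abs_add_le _ _
    _ ≤ |w i| * (2 ^ (p - 1) * (|f i| ^ p + |g i| ^ p)) := by gcongr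
    _ = 2 ^ (p - 1) * (|w i| * |f i| ^ p + |w i| * |g i| ^ p) := by ring

theorem sub (hp : 1 ≤ p) (hf : MemWeightedLp w p f) (hg : MemWeightedLp w p g) :
    MemWeightedLp w p fun i => f i - g i := by
  simpa only [neg_one_mul, ← sub_eq_add_neg] using hf.add hp (hg.const_mul (-1))

theorem summable_mul_abs_rpow (hf : MemWeightedLp w p f) : Summable fun i => w i * |f i| ^ p := by
  refine Summable.of_norm (Summable.congr hf fun i => ?_)
  rw [Real.norm_eq_abs, abs_mul, abs_of_nonneg (Real.rpow_nonneg (abs_nonneg (f i)) p)]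

theorem summable_mul_pPow_mul (hp : 1 ≤ p) (hf : MemWeightedLp w p f)
    (hg : MemWeightedLp w p g) : Summable fun i => w i * pPow p (f i) * g i := by
  refine Summable.of_norm_bounded (hf.abs.add hp hg.abs) fun i => ?_
  have hbound := abs_pPow_add_mul_mul_le (t := 0) hp (by simp) (f i) (g i)
  rw [zero_mul, add_zero] at hbound
  rw [Real.norm_eq_abs, mul_assoc, abs_mul]
  gcongr

theorem hasDerivAt_tsum_mul_abs_rpow (hp : 1 < p) (hf : MemWeightedLp w p f)
    (hg : MemWeightedLp w p g) :
    HasDerivAt (fun t : ℝ => ∑' i, w i * |f i + t * g i| ^ p)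
      (p * ∑' i, w i * pPow p (f i) * g i) 0 := by
  have hterm (i : ι) (t : ℝ) : HasDerivAt (fun t : ℝ => w i * |f i + t * g i| ^ p)
      (p * (w i * pPow p (f i + t * g i) * g i)) t := by
    have hline : HasDerivAt (fun t : ℝ => f i + t * g i) (g i) t := by
      simpa only [one_mul] using ((hasDerivAt_id' t).mul_const (g i)).const_add (f i)
    refine (((hasDerivAt_abs_rpow_pPow hp _).comp t hline).const_mul (w i)).congr_deriv ?_
    ring
  have hbound (i : ι) (t : ℝ) (ht : t ∈ Metric.ball (0 : ℝ) 1) :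
      ‖p * (w i * pPow p (f i + t * g i) * g i)‖ ≤ p * (|w i| * |(|f i| + |g i|)| ^ p) := by
    rw [mem_ball_zero_iff, Real.norm_eq_abs] at ht
    rw [Real.norm_eq_abs, abs_mul, abs_of_pos (zero_lt_one.trans hp), mul_assoc, abs_mul]
    gcongr
    exact abs_pPow_add_mul_mul_le hp.le ht.le (f i) (g i)
  simpa only [zero_mul, add_zero, tsum_mul_left] using
    hasDerivAt_tsum_of_isPreconnected ((hf.abs.add hp.le hg.abs).mul_left p) Metric.isOpen_ball
      (convex_ball (0 : ℝ) 1).isPreconnected (fun i t _ => hterm i t) hbound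
      (Metric.mem_ball_self one_pos)
      (by simpa only [zero_mul, add_zero] using hf.summable_mul_abs_rpow)
      (Metric.mem_ball_self one_pos)

end MemWeightedLp

section Edges

variable {X : Type*} {b : X → X → ℝ} {p : ℝ} {ψ : X → ℝ}

theorem memWeightedLp_fst_of_finite_support (hsum : ∀ x, Summable (b x)) (hp : p ≠ 0)
    (hψ : (Function.support ψ).Finite) :
    MemWeightedLp (fun z : X × X => b z.1 z.2) p fun z => ψ z.1 := by
  refine (summable_prod_of_nonneg fun z => by positivity).mpr
    ⟨fun x => (hsum x).abs.mul_right (|ψ x| ^ p),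
      summable_of_hasFiniteSupport (hψ.subset fun x hx hψx => hx ?_)⟩
  simp only [hψx, abs_zero, Real.zero_rpow hp, mul_zero, tsum_zero]

theorem MemWeightedLp.snd_of_fst (hsymm : ∀ x y, b x y = b y x)
    (hψ : MemWeightedLp (fun z : X × X => b z.1 z.2) p fun z => ψ z.1) :
    MemWeightedLp (fun z : X × X => b z.1 z.2) p fun z => ψ z.2 := by
  refine ((Equiv.prodComm X X).summable_iff.mpr hψ).congr fun z => ?_
  simp only [Function.comp_apply, Equiv.prodComm_apply, Prod.fst_swap, Prod.snd_swap,
    hsymm z.1 z.2]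

theorem hasSum_tsum_mul_of_antisymm {F : X → X → ℝ} (hF : ∀ x y, F y x = -F x y)
    (h : Summable fun z : X × X => F z.1 z.2 * ψ z.1) :
    HasSum (fun x => (∑' y, F x y) * ψ x)
      (1 / 2 * ∑' z : X × X, F z.1 z.2 * (ψ z.1 - ψ z.2)) := by
  have hswap (z : X × X) : F z.swap.1 z.swap.2 * ψ z.swap.1 = -(F z.1 z.2 * ψ z.2) := by
    rw [Prod.fst_swap, Prod.snd_swap, hF, neg_mul]
  have h_snd : HasSum (fun z : X × X => F z.1 z.2 * ψ z.2)
      (-∑' z : X × X, F z.1 z.2 * ψ z.1) := by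
    simpa only [Function.comp_def, Equiv.prodComm_apply, hswap, neg_neg] using
      ((Equiv.prodComm X X).hasSum_iff.mpr h.hasSum).neg
  have hsplit : ∑' z : X × X, F z.1 z.2 * (ψ z.1 - ψ z.2)
      = 2 * ∑' z : X × X, F z.1 z.2 * ψ z.1 := by
    simp only [mul_sub]
    rw [(h.hasSum.sub h_snd).tsum_eq]
    ring
  rw [hsplit, ← mul_assoc, one_div_mul_cancel two_ne_zero, one_mul, h.tsum_prod]
  simpa only [tsum_mul_right] using h.prod.hasSum

end Edges

section Energy

variable {X : Type*} {m : X → ℝ} {b : X → X → ℝ} {c : X → ℝ} {p : ℝ} {V : Set X} {φ ψ : X → ℝ}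

theorem memD_iff (hb : ∀ x y, 0 ≤ b x y) :
    MemD b c p φ ↔ MemWeightedLp (fun z : X × X => b z.1 z.2) p (fun z => φ z.1 - φ z.2) ∧
      MemWeightedLp c p φ := by
  simp only [MemD, MemWeightedLp, abs_of_nonneg (hb _ _)]

theorem MemD.add_mul (hb : ∀ x y, 0 ≤ b x y) (hp : 1 ≤ p) (hφ : MemD b c p φ)
    (hψ : MemD b c p ψ) (t : ℝ) : MemD b c p fun x => φ x + t * ψ x := by
  rw [memD_iff hb] at hφ hψ ⊢
  refine ⟨?_, hφ.2.add hp (hψ.2.const_mul t)⟩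
  simpa only [mul_sub, add_sub_add_comm] using hφ.1.add hp (hψ.1.const_mul t)

/-- The first variation of `h` at `φ` in the direction `ψ`, divided by `p`. It is the weak form of
`⟨Hφ, ψ⟩`, whose series converge for all `φ, ψ ∈ D`. -/
noncomputable def energyVariation (b : X → X → ℝ) (c : X → ℝ) (p : ℝ) (φ ψ : X → ℝ) : ℝ :=
  1 / 2 * ∑' z : X × X, b z.1 z.2 * pPow p (φ z.1 - φ z.2) * (ψ z.1 - ψ z.2)
    + ∑' x, c x * pPow p (φ x) * ψ x

theorem hasDerivAt_energy (hb : ∀ x y, 0 ≤ b x y) (hp : 1 < p) (hφ : MemD b c p φ)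
    (hψ : MemD b c p ψ) :
    HasDerivAt (fun t : ℝ => energy b c p fun x => φ x + t * ψ x)
      (p * energyVariation b c p φ ψ) 0 := by
  rw [memD_iff hb] at hφ hψ
  have hedges := (hφ.1.hasDerivAt_tsum_mul_abs_rpow hp hψ.1).const_mul (1 / 2)
  have hvertices := hφ.2.hasDerivAt_tsum_mul_abs_rpow hp hψ.2
  simpa only [energy, energyVariation, mul_add, mul_sub, add_sub_add_comm, mul_left_comm p]
    using hedges.fun_add hvertices

theorem indicator_hOp_mul_mul (hm : ∀ x ∈ V, m x ≠ 0) (hψ : MemC V ψ) (x : X) :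
    V.indicator (fun x => HOp m b c p φ x * ψ x * m x) x =
      (∑' y, b x y * pPow p (φ x - φ y)) * ψ x + c x * pPow p (φ x) * ψ x := by
  by_cases hx : x ∈ V
  · have hmx := hm x hx
    rw [Set.indicator_of_mem hx, HOp]
    field_simp
  · rw [Set.indicator_of_notMem hx, hψ x hx, mul_zero, mul_zero, add_zero]

theorem hasSum_indicator_hOp_mul_mul (hm : ∀ x ∈ V, m x ≠ 0) (hb : ∀ x y, 0 ≤ b x y)
    (hsymm : ∀ x y, b x y = b y x) (hp : 1 ≤ p) (hφ : MemD b c p φ) (hψV : MemC V ψ)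
    (hψb : MemWeightedLp (fun z : X × X => b z.1 z.2) p fun z => ψ z.1)
    (hψc : MemWeightedLp c p ψ) :
    HasSum (V.indicator fun x => HOp m b c p φ x * ψ x * m x) (energyVariation b c p φ ψ) := by
  rw [memD_iff hb] at hφ
  have hantisymm (x y : X) :
      b y x * pPow p (φ y - φ x) = -(b x y * pPow p (φ x - φ y)) := by
    rw [hsymm y x, ← neg_sub (φ x) (φ y), pPow_neg, mul_neg]
  have hedges := hasSum_tsum_mul_of_antisymm hantisymm (hφ.1.summable_mul_pPow_mul hp hψb)
  have hvertices := (hφ.2.summable_mul_pPow_mul hp hψc).hasSum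
  rw [funext (indicator_hOp_mul_mul hm hψV)]
  exact hedges.add hvertices

end Energy

theorem stmt4_general {X : Type*} {m : X → ℝ} {b : X → X → ℝ} {c : X → ℝ} {p : ℝ}
    {V : Set X} {φ ψ : X → ℝ} (hm : ∀ x ∈ V, m x ≠ 0) (hb : ∀ x y, 0 ≤ b x y)
    (hsymm : ∀ x y, b x y = b y x) (hp : 1 < p) (hφ : MemD b c p φ) (hψV : MemC V ψ)
    (hψb : MemWeightedLp (fun z : X × X => b z.1 z.2) p fun z => ψ z.1)
    (hψc : MemWeightedLp c p ψ) :
    (∀ t : ℝ, MemD b c p (fun x => φ x + t * ψ x)) ∧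
    Summable (V.indicator fun x => HOp m b c p φ x * ψ x * m x) ∧
    HasDerivAt (fun t : ℝ => energy b c p (fun x => φ x + t * ψ x))
      (p * bracket m V (HOp m b c p φ) ψ) 0 := by
  have hψ : MemD b c p ψ := (memD_iff hb).mpr ⟨hψb.sub hp.le (hψb.snd_of_fst hsymm), hψc⟩
  have hgreen := hasSum_indicator_hOp_mul_mul hm hb hsymm hp.le hφ hψV hψb hψc
  refine ⟨hφ.add_mul hb hp.le hψ, hgreen.summable, ?_⟩
  rw [bracket, hgreen.tsum_eq]
  exact hasDerivAt_energy hb hp hφ hψ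

theorem stmt4 {X : Type*} [Countable X] [Infinite X]
    (m : X → ℝ) (b : X → X → ℝ) (c : X → ℝ) (p : ℝ)
    (hG : IsGraph m b) (hgconn : ConnectedIn b Set.univ) (hp : 1 < p)
    (V : Set X) (φ : X → ℝ) (hφ : MemD b c p φ) (ψ : X → ℝ) (hψ : MemCc V ψ) :
    (∀ t : ℝ, MemD b c p (fun x => φ x + t * ψ x)) ∧
    HasDerivAt (fun t : ℝ => energy b c p (fun x => φ x + t * ψ x))
      (p * bracket m V (HOp m b c p φ) ψ) 0 := by
  obtain ⟨hm, hb, hsymm, -, hsum⟩ := hG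
  have hp₀ : p ≠ 0 := (zero_lt_one.trans hp).ne'
  exact (stmt4_general (fun x _ => (hm x).ne') hb hsymm hp hφ hψ.2
    (memWeightedLp_fst_of_finite_support hsum hp₀ hψ.1)
    (.of_finite_support c hp₀ hψ.1)).imp_right And.right
end

section
/- Anane–Díaz–Saá-type inequality: Let p ∈ (1,∞) and let K ⊆ X be finite. Let u₁, u₂ ∈ F(K) with u₁ > 0 and u₂ > 0 on K. Then ⟨ Lu₁/u₁^{p−1} − Lu₂/u₂^{p−1} , u₁^p − u₂^p ⟩_K ≥ Σ_{x∈K, y∈∂K} b(x,y)·( u₁^p(x) − u₂^p(x) )·( ⟨1 − u₁(y)/u₁(x)⟩_p − ⟨1 − u₂(y)/u₂(x)⟩_p ). If K is connected and equality holds, then u₁ = C·u₂ on K for some constant C > 0. In particular, if φ, ψ are functions vanishing outside K with φ > 0 and ψ > 0 on K, then ⟨Lφ, (φ^p − ψ^p)/φ^{p−1}⟩_K + ⟨Lψ, (ψ^p − φ^p)/ψ^{p−1}⟩_K ≥ 0, and when K is connected, equality holds if and only if φ = C·ψ on X for some C > 0. -/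
open scoped BigOperators

/-- The left-hand side of the Anane–Díaz–Saá inequality. -/
noncomputable def adsLHS {X : Type*} (m : X → ℝ) (b : X → X → ℝ) (p : ℝ)
    (K : Set X) (u₁ u₂ : X → ℝ) : ℝ :=
  bracket m K
    (fun x => LOp m b p u₁ x / u₁ x ^ (p - 1) - LOp m b p u₂ x / u₂ x ^ (p - 1))
    (fun x => u₁ x ^ p - u₂ x ^ p)

/-- The boundary term on the right-hand side of the Anane–Díaz–Saá inequality. -/
noncomputable def adsRHS {X : Type*} (b : X → X → ℝ) (p : ℝ)
    (K : Set X) (u₁ u₂ : X → ℝ) : ℝ :=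
  ∑' z : X × X, Set.indicator (K ×ˢ bdry b K)
    (fun z => b z.1 z.2 * (u₁ z.1 ^ p - u₂ z.1 ^ p) *
      (pPow p (1 - u₁ z.2 / u₁ z.1) - pPow p (1 - u₂ z.2 / u₂ z.1))) z

/-- The symmetrised Anane–Díaz–Saá expression for compactly supported functions. -/
noncomputable def adsPair {X : Type*} (m : X → ℝ) (b : X → X → ℝ) (p : ℝ)
    (K : Set X) (φ ψ : X → ℝ) : ℝ :=
  bracket m K (LOp m b p φ) (fun x => (φ x ^ p - ψ x ^ p) / φ x ^ (p - 1)) +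
  bracket m K (LOp m b p ψ) (fun x => (ψ x ^ p - φ x ^ p) / ψ x ^ (p - 1))

/-!
Write `a, a'` and `s, s'` for the values of `u₁` and `u₂` at two neighbours. By weighted
convexity of `t ↦ t ^ p` (Radon's inequality) the Picone defect
`|a - a'| ^ p - ⟨s - s'⟩_p (a ^ p / s ^ (p - 1) - a' ^ p / s' ^ (p - 1))` is non-negative, and it
vanishes only if `a / s = a' / s'`. Each side of the inequality is a sum of one kernel over pairs
`(x, y)` with `x ∈ K`, so their difference is the sum over `K × K`. Adding the kernel at `(x, y)`
and `(y, x)` gives `b x y` times a sum of two Picone defects. Equality therefore makes `u₁ / u₂`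
agree at neighbours in `K`, hence constant if `K` is connected.
-/

section RealPowers

variable {p : ℝ}

theorem pPow_zero (p : ℝ) : pPow p 0 = 0 := by simp [pPow]

theorem pPow_of_pos {a : ℝ} (ha : 0 < a) : pPow p a = a ^ (p - 1) := by
  rw [pPow, Real.sign_of_pos ha, abs_of_pos ha, mul_one]

theorem pPow_mul_of_pos {c : ℝ} (hc : 0 < c) (a : ℝ) :
    pPow p (c * a) = c ^ (p - 1) * pPow p a := by
  have hsign : Real.sign (c * a) = Real.sign a := by
    rcases lt_trichotomy a 0 with ha | rfl | ha
    · rw [Real.sign_of_neg ha, Real.sign_of_neg (mul_neg_of_pos_of_neg hc ha)]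
    · rw [mul_zero]
    · rw [Real.sign_of_pos ha, Real.sign_of_pos (mul_pos hc ha)]
  rw [pPow, pPow, hsign, abs_mul, abs_of_pos hc, Real.mul_rpow hc.le (abs_nonneg a), mul_assoc]

theorem mul_pPow_self (hp : p ≠ 0) (a : ℝ) : a * pPow p a = |a| ^ p := by
  have hself : ∀ {c : ℝ}, 0 < c → c * pPow p c = |c| ^ p := fun {c} hc => by
    rw [pPow_of_pos hc, abs_of_pos hc, Real.rpow_sub_one hc.ne', mul_div_cancel₀ _ hc.ne']
  rcases lt_trichotomy a 0 with ha | rfl | ha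
  · rw [← abs_neg, ← hself (neg_pos.2 ha), pPow_neg, neg_mul_neg]
  · rw [zero_mul, abs_zero, Real.zero_rpow hp]
  · exact hself ha

theorem pPow_one_sub_div {a : ℝ} (ha : 0 < a) (a' : ℝ) :
    pPow p (1 - a' / a) = pPow p (a - a') / a ^ (p - 1) := by
  have hfactor : a - a' = a * (1 - a' / a) := by field_simp
  rw [hfactor, pPow_mul_of_pos ha, mul_div_cancel_left₀ _ (Real.rpow_pos_of_pos ha _).ne']

theorem rpow_div_rpow_sub_one {a s : ℝ} (ha : 0 ≤ a) (hs : 0 < s) :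
    a ^ p / s ^ (p - 1) = s * (a / s) ^ p := by
  rw [Real.div_rpow ha hs.le, Real.rpow_sub_one hs.ne', div_div_eq_mul_div, mul_comm, mul_div_assoc]

theorem abs_sub_rpow_le {q : ℝ} (hq : 0 ≤ q) (a a' : ℝ) :
    |a - a'| ^ q ≤ 2 ^ q * (|a| ^ q + |a'| ^ q) := by
  have hmax : |a - a'| ≤ 2 * max |a| |a'| := by
    linarith [abs_sub a a', le_max_left |a| |a'|, le_max_right |a| |a'|]
  calc |a - a'| ^ q ≤ (2 * max |a| |a'|) ^ q := Real.rpow_le_rpow (abs_nonneg _) hmax hq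
    _ = 2 ^ q * max (|a| ^ q) (|a'| ^ q) := by
      rw [Real.mul_rpow zero_le_two (by positivity),
        Real.rpow_max (abs_nonneg a) (abs_nonneg a') hq]
    _ ≤ 2 ^ q * (|a| ^ q + |a'| ^ q) := by
      gcongr
      exact max_le_add_of_nonneg (by positivity) (by positivity)

end RealPowers

section Picone

variable {p a a' s s' : ℝ}

theorem add_div_add_eq_weighted_mean (hs : 0 < s) (hs' : 0 < s') :
    (a + a') / (s + s') = s / (s + s') * (a / s) + s' / (s + s') * (a' / s') := by
  field_simp

theorem perspective_add_le_of_convexOn {f : ℝ → ℝ} {S : Set ℝ} (hf : ConvexOn ℝ S f) (hs : 0 < s)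
    (hs' : 0 < s') (ha : a / s ∈ S) (ha' : a' / s' ∈ S) :
    (s + s') * f ((a + a') / (s + s')) ≤ s * f (a / s) + s' * f (a' / s') := by
  calc (s + s') * f ((a + a') / (s + s'))
      ≤ (s + s') * (s / (s + s') * f (a / s) + s' / (s + s') * f (a' / s')) := by
        rw [add_div_add_eq_weighted_mean hs hs']
        gcongr
        exact hf.2 ha ha' (by positivity) (by positivity) (by field_simp)
    _ = s * f (a / s) + s' * f (a' / s') := by field_simp

theorem perspective_add_lt_of_strictConvexOn {f : ℝ → ℝ} {S : Set ℝ} (hf : StrictConvexOn ℝ S f)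
    (hs : 0 < s) (hs' : 0 < s') (ha : a / s ∈ S) (ha' : a' / s' ∈ S) (hne : a / s ≠ a' / s') :
    (s + s') * f ((a + a') / (s + s')) < s * f (a / s) + s' * f (a' / s') := by
  calc (s + s') * f ((a + a') / (s + s'))
      < (s + s') * (s / (s + s') * f (a / s) + s' / (s + s') * f (a' / s')) := by
        rw [add_div_add_eq_weighted_mean hs hs']
        gcongr
        exact hf.2 ha ha' hne (by positivity) (by positivity) (by field_simp)
    _ = s * f (a / s) + s' * f (a' / s') := by field_simp

theorem add_rpow_div_add_rpow_le (hp : 1 ≤ p) (ha : 0 ≤ a) (ha' : 0 ≤ a') (hs : 0 < s)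
    (hs' : 0 < s') :
    (a + a') ^ p / (s + s') ^ (p - 1) ≤ a ^ p / s ^ (p - 1) + a' ^ p / s' ^ (p - 1) := by
  rw [rpow_div_rpow_sub_one (add_nonneg ha ha') (add_pos hs hs'), rpow_div_rpow_sub_one ha hs,
    rpow_div_rpow_sub_one ha' hs']
  exact perspective_add_le_of_convexOn (convexOn_rpow hp) hs hs' (div_nonneg ha hs.le)
    (div_nonneg ha' hs'.le)

theorem add_rpow_div_add_rpow_lt (hp : 1 < p) (ha : 0 ≤ a) (ha' : 0 ≤ a') (hs : 0 < s)
    (hs' : 0 < s') (hne : a / s ≠ a' / s') :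
    (a + a') ^ p / (s + s') ^ (p - 1) < a ^ p / s ^ (p - 1) + a' ^ p / s' ^ (p - 1) := by
  rw [rpow_div_rpow_sub_one (add_nonneg ha ha') (add_pos hs hs'), rpow_div_rpow_sub_one ha hs,
    rpow_div_rpow_sub_one ha' hs']
  exact perspective_add_lt_of_strictConvexOn (strictConvexOn_rpow hp) hs hs' (div_nonneg ha hs.le)
    (div_nonneg ha' hs'.le) hne

/-- The defect in the discrete Picone inequality, for the values `a, a'` and `s, s'` of two
functions at the end points of an edge. -/
noncomputable def piconeDefect (p a a' s s' : ℝ) : ℝ :=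
  |a - a'| ^ p - pPow p (s - s') * (a ^ p / s ^ (p - 1) - a' ^ p / s' ^ (p - 1))

theorem piconeDefect_swap (p a a' s s' : ℝ) :
    piconeDefect p a' a s' s = piconeDefect p a a' s s' := by
  rw [piconeDefect, piconeDefect, abs_sub_comm, ← neg_sub s s', pPow_neg]
  ring

theorem piconeDefect_self_right (p a a' s : ℝ) : piconeDefect p a a' s s = |a - a'| ^ p := by
  rw [piconeDefect, sub_self, pPow_zero, zero_mul, sub_zero]

theorem piconeDefect_of_lt (h : s' < s) :
    piconeDefect p a a' s s' = (s - s') ^ (p - 1) *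
      (|a - a'| ^ p / (s - s') ^ (p - 1) + a' ^ p / s' ^ (p - 1) - a ^ p / s ^ (p - 1)) := by
  have hpos : 0 < (s - s') ^ (p - 1) := Real.rpow_pos_of_pos (sub_pos.2 h) _
  rw [piconeDefect, pPow_of_pos (sub_pos.2 h)]
  field_simp
  ring

theorem piconeDefect_nonneg_of_lt (hp : 1 ≤ p) (ha : 0 ≤ a) (ha' : 0 ≤ a') (hs' : 0 < s')
    (h : s' < s) : 0 ≤ piconeDefect p a a' s s' := by
  have hs : 0 < s := hs'.trans h
  have htriangle : a ≤ |a - a'| + a' := by linarith [le_abs_self (a - a')]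
  have hradon : a ^ p / s ^ (p - 1) ≤
      |a - a'| ^ p / (s - s') ^ (p - 1) + a' ^ p / s' ^ (p - 1) :=
    calc a ^ p / s ^ (p - 1) ≤ (|a - a'| + a') ^ p / (s - s' + s') ^ (p - 1) := by
          rw [sub_add_cancel]
          gcongr
      _ ≤ _ := add_rpow_div_add_rpow_le hp (abs_nonneg _) ha' (sub_pos.2 h) hs'
  rw [piconeDefect_of_lt h]
  exact mul_nonneg (Real.rpow_nonneg (sub_pos.2 h).le _) (sub_nonneg.2 hradon)

theorem piconeDefect_nonneg (hp : 1 ≤ p) (ha : 0 ≤ a) (ha' : 0 ≤ a') (hs : 0 < s) (hs' : 0 < s') :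
    0 ≤ piconeDefect p a a' s s' := by
  rcases lt_trichotomy s s' with h | rfl | h
  · rw [← piconeDefect_swap]
    exact piconeDefect_nonneg_of_lt hp ha' ha hs h
  · rw [piconeDefect_self_right]
    positivity
  · exact piconeDefect_nonneg_of_lt hp ha ha' hs' h

theorem piconeDefect_pos_of_lt (hp : 1 < p) (ha : 0 ≤ a) (ha' : 0 ≤ a') (hs' : 0 < s')
    (h : s' < s) (hne : a / s ≠ a' / s') : 0 < piconeDefect p a a' s s' := by
  have hs : 0 < s := hs'.trans h
  have hd : 0 < s - s' := sub_pos.2 h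
  have hradon : a ^ p / s ^ (p - 1) <
      |a - a'| ^ p / (s - s') ^ (p - 1) + a' ^ p / s' ^ (p - 1) := by
    rcases lt_or_ge a a' with hlt | hle
    · have htriangle : a < |a - a'| + a' := by linarith [abs_nonneg (a - a')]
      calc a ^ p / s ^ (p - 1) < (|a - a'| + a') ^ p / (s - s' + s') ^ (p - 1) := by
            rw [sub_add_cancel]
            gcongr
        _ ≤ _ := add_rpow_div_add_rpow_le hp.le (abs_nonneg _) ha' hd hs'
    · have hslope : (a - a') / (s - s') ≠ a' / s' := by
        contrapose! hne
        rw [div_eq_div_iff hd.ne' hs'.ne'] at hne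
        rw [div_eq_div_iff hs.ne' hs'.ne']
        linarith
      have hstrict := add_rpow_div_add_rpow_lt hp (sub_nonneg.2 hle) ha' hd hs' hslope
      rwa [sub_add_cancel, sub_add_cancel, ← abs_of_nonneg (sub_nonneg.2 hle)] at hstrict
  rw [piconeDefect_of_lt h]
  exact mul_pos (Real.rpow_pos_of_pos hd _) (sub_pos.2 hradon)

theorem piconeDefect_pos (hp : 1 < p) (ha : 0 ≤ a) (ha' : 0 ≤ a') (hs : 0 < s) (hs' : 0 < s')
    (hne : a / s ≠ a' / s') : 0 < piconeDefect p a a' s s' := by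
  rcases lt_trichotomy s s' with h | rfl | h
  · rw [← piconeDefect_swap]
    exact piconeDefect_pos_of_lt hp ha' ha hs h hne.symm
  · have hdiff : a - a' ≠ 0 := sub_ne_zero.2 fun heq => hne (by rw [heq])
    rw [piconeDefect_self_right]
    positivity
  · exact piconeDefect_pos_of_lt hp ha ha' hs' h hne

theorem piconeDefect_add_piconeDefect (hp : p ≠ 0) (ha : 0 < a) (ha' : 0 < a') (hs : 0 < s)
    (hs' : 0 < s') :
    piconeDefect p a a' s s' + piconeDefect p s s' a a' =
      (a ^ p - s ^ p) * (pPow p (1 - a' / a) - pPow p (1 - s' / s)) +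
        (a' ^ p - s' ^ p) * (pPow p (1 - a / a') - pPow p (1 - s / s')) := by
  have hself : ∀ {r : ℝ}, 0 < r → r ^ p / r ^ (p - 1) = r := fun {r} hr => by
    rw [rpow_div_rpow_sub_one hr.le hr, div_self hr.ne', Real.one_rpow, mul_one]
  rw [piconeDefect, piconeDefect, ← mul_pPow_self hp, ← mul_pPow_self hp, pPow_one_sub_div ha,
    pPow_one_sub_div ha', pPow_one_sub_div hs, pPow_one_sub_div hs', ← neg_sub a a', pPow_neg,
    ← neg_sub s s', pPow_neg]
  linear_combination (-pPow p (a - a')) * (hself ha - hself ha') -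
    pPow p (s - s') * (hself hs - hself hs')

end Picone

section Sums

theorem hasSum_indicator_finset_prod {α β M : Type*} [AddCommMonoid M] [TopologicalSpace M]
    [ContinuousAdd M] (K : Finset α) (S : Set β) (f : α → β → M)
    (hf : ∀ x ∈ K, Summable (S.indicator (f x))) :
    HasSum (((K : Set α) ×ˢ S).indicator fun z => f z.1 z.2)
      (∑ x ∈ K, ∑' y, S.indicator (f x) y) := by
  classical
  have hfiber : ∀ x ∈ K, HasSum (fun z : α × β => if z.1 = x then S.indicator (f x) z.2 else 0)
      (∑' y, S.indicator (f x) y) := fun x hx => by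
    refine ((Prod.mk_right_injective x).hasSum_iff ?_).1 ?_
    · rintro ⟨x', y⟩ hz
      exact if_neg fun h => hz ⟨y, by rw [← h]⟩
    · simpa only [Function.comp_def, if_true] using (hf x hx).hasSum
  convert hasSum_sum hfiber using 1
  funext ⟨x, y⟩
  by_cases hx : x ∈ K <;> by_cases hy : y ∈ S <;> simp [hx, hy]

theorem tsum_eq_sum_add_tsum_indicator {α : Type*} {f : α → ℝ} (hf : Summable f) {K : Finset α}
    {S : Set α} (hKS : Disjoint (K : Set α) S) (hsupp : Function.support f ⊆ K ∪ S) :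
    ∑' y, f y = ∑ y ∈ K, f y + ∑' y, S.indicator f y := by
  rw [sum_eq_tsum_indicator, ← (hf.indicator _).tsum_add (hf.indicator _),
    ← Set.indicator_union_of_disjoint hKS, Set.indicator_eq_self.2 hsupp]

theorem summable_mul_pPow_sub {α : Type*} {p : ℝ} (hp : 1 ≤ p) {w u : α → ℝ} (hw : ∀ y, 0 ≤ w y)
    (hsum : Summable w) (hu : Summable fun y => w y * |u y| ^ (p - 1)) (t : ℝ) :
    Summable fun y => w y * pPow p (t - u y) := by
  refine .of_norm_bounded (((hsum.mul_right (|t| ^ (p - 1))).add hu).mul_left (2 ^ (p - 1)))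
    fun y => ?_
  calc ‖w y * pPow p (t - u y)‖ = w y * |pPow p (t - u y)| := by
        rw [Real.norm_eq_abs, abs_mul, abs_of_nonneg (hw y)]
    _ ≤ w y * (2 ^ (p - 1) * (|t| ^ (p - 1) + |u y| ^ (p - 1))) :=
      mul_le_mul_of_nonneg_left
        ((abs_pPow_le _ _).trans (abs_sub_rpow_le (sub_nonneg.2 hp) _ _)) (hw y)
    _ = 2 ^ (p - 1) * (w y * |t| ^ (p - 1) + w y * |u y| ^ (p - 1)) := by ring

end Sums

section Graph

variable {X : Type*} {m : X → ℝ} {b : X → X → ℝ} {p : ℝ}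

theorem IsGraph.measure_pos (hG : IsGraph m b) (x : X) : 0 < m x := hG.1 x

theorem IsGraph.weight_nonneg (hG : IsGraph m b) (x y : X) : 0 ≤ b x y := hG.2.1 x y

theorem IsGraph.weight_symm (hG : IsGraph m b) (x y : X) : b x y = b y x := hG.2.2.1 x y

theorem IsGraph.summable_weight (hG : IsGraph m b) (x : X) : Summable (b x) := hG.2.2.2.2 x

theorem IsGraph.mem_bdry (hG : IsGraph m b) {V : Set X} {x y : X} (hx : x ∈ V) (hy : y ∉ V)
    (hxy : b x y ≠ 0) : y ∈ bdry b V :=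
  ⟨hy, x, hx, hG.weight_symm x y ▸ (hG.weight_nonneg x y).lt_of_ne' hxy⟩

theorem ConnectedIn.eq_of_forall_adj {V : Set X} {β : Type*} {f : X → β} (hV : ConnectedIn b V)
    (hf : ∀ x ∈ V, ∀ y ∈ V, 0 < b x y → f x = f y) {x y : X} (hx : x ∈ V) (hy : y ∈ V) :
    f x = f y := by
  induction hV x hx y hy with
  | refl => rfl
  | tail _ hstep ih => exact (ih hstep.1).trans (hf _ hstep.1 _ hstep.2.1 hstep.2.2)

theorem MemC.memF {K V : Set X} {f : X → ℝ} (hf : MemC K f) (hK : K.Finite) (hp : p ≠ 1) :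
    MemF b p V f := fun x _ =>
  summable_of_hasFiniteSupport <| hK.subset fun y hy => by
    contrapose! hy
    simp [hf y hy, Real.zero_rpow (sub_ne_zero.2 hp)]

theorem bracket_coe_finset (m : X → ℝ) (K : Finset X) (f g : X → ℝ) :
    bracket m K f g = ∑ x ∈ K, f x * g x * m x :=
  (sum_eq_tsum_indicator _ K).symm

theorem hasSum_mul_pPow_sub (hG : IsGraph m b) (hp : 1 ≤ p) {f : X → ℝ} {x : X}
    (hf : Summable fun y => b x y * |f y| ^ (p - 1)) :
    HasSum (fun y => b x y * pPow p (f x - f y)) (m x * LOp m b p f x) := by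
  rw [LOp, ← mul_assoc, mul_one_div_cancel (hG.measure_pos x).ne', one_mul]
  exact (summable_mul_pPow_sub hp (hG.weight_nonneg x) (hG.summable_weight x) hf (f x)).hasSum

theorem LOp_const_mul {C : ℝ} (hC : 0 < C) (f : X → ℝ) (x : X) :
    LOp m b p (fun y => C * f y) x = C ^ (p - 1) * LOp m b p f x := by
  simp only [LOp, ← mul_sub, pPow_mul_of_pos hC, mul_left_comm _ (C ^ (p - 1)), tsum_mul_left]

end Graph

section AnaneDiazSaa

variable {X : Type*} {m : X → ℝ} {b : X → X → ℝ} {p : ℝ} {K : Finset X} {u v : X → ℝ}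

/-- The contribution of the ordered pair `(x, y)` to the Anane–Díaz–Saá inequality: summed over
`x ∈ K` it gives the left-hand side when `y` ranges over all vertices, and the right-hand side
when `y` ranges over `∂K`. -/
noncomputable def adsKernel (b : X → X → ℝ) (p : ℝ) (u v : X → ℝ) (x y : X) : ℝ :=
  b x y * (u x ^ p - v x ^ p) * (pPow p (1 - u y / u x) - pPow p (1 - v y / v x))

theorem hasSum_adsKernel (hG : IsGraph m b) (hp : 1 ≤ p) {x : X}
    (huF : Summable fun y => b x y * |u y| ^ (p - 1))
    (hvF : Summable fun y => b x y * |v y| ^ (p - 1)) (hu : 0 < u x) (hv : 0 < v x) :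
    HasSum (adsKernel b p u v x)
      ((LOp m b p u x / u x ^ (p - 1) - LOp m b p v x / v x ^ (p - 1)) *
        (u x ^ p - v x ^ p) * m x) := by
  have hvalue : (LOp m b p u x / u x ^ (p - 1) - LOp m b p v x / v x ^ (p - 1)) *
      (u x ^ p - v x ^ p) * m x = (m x * LOp m b p u x / u x ^ (p - 1) -
        m x * LOp m b p v x / v x ^ (p - 1)) * (u x ^ p - v x ^ p) := by ring
  have hkernel : adsKernel b p u v x = fun y => (b x y * pPow p (u x - u y) / u x ^ (p - 1) -
      b x y * pPow p (v x - v y) / v x ^ (p - 1)) * (u x ^ p - v x ^ p) := by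
    funext y
    rw [adsKernel, pPow_one_sub_div hu, pPow_one_sub_div hv]
    ring
  rw [hvalue, hkernel]
  exact (((hasSum_mul_pPow_sub hG hp huF).div_const _).sub
    ((hasSum_mul_pPow_sub hG hp hvF).div_const _)).mul_right _

theorem adsLHS_sub_adsRHS (hG : IsGraph m b) (hp : 1 ≤ p) (huF : MemF b p K u)
    (hvF : MemF b p K v) (hu : ∀ x ∈ (K : Set X), 0 < u x) (hv : ∀ x ∈ (K : Set X), 0 < v x) :
    adsLHS m b p K u v - adsRHS b p K u v = ∑ x ∈ K, ∑ y ∈ K, adsKernel b p u v x y := by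
  have hsum := fun x hx => hasSum_adsKernel hG hp (huF x hx) (hvF x hx) (hu x hx) (hv x hx)
  have hRHS : adsRHS b p K u v = ∑ x ∈ K, ∑' y, (bdry b K).indicator (adsKernel b p u v x) y :=
    (hasSum_indicator_finset_prod K (bdry b K) (adsKernel b p u v)
      fun x hx => (hsum x hx).summable.indicator _).tsum_eq
  rw [hRHS, adsLHS, bracket_coe_finset, sub_eq_iff_eq_add, ← Finset.sum_add_distrib]
  refine Finset.sum_congr rfl fun x hx => ?_
  rw [← (hsum x hx).tsum_eq]
  refine tsum_eq_sum_add_tsum_indicator (hsum x hx).summable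
    (Set.disjoint_right.2 fun _ hy => hy.1) fun y hy => ?_
  by_cases hyK : y ∈ (K : Set X)
  · exact Or.inl hyK
  · exact Or.inr (hG.mem_bdry hx hyK (left_ne_zero_of_mul (left_ne_zero_of_mul hy)))

theorem adsKernel_add_adsKernel_swap (hp : p ≠ 0) {x y : X} (hb : b x y = b y x) (hux : 0 < u x)
    (huy : 0 < u y) (hvx : 0 < v x) (hvy : 0 < v y) :
    adsKernel b p u v x y + adsKernel b p u v y x =
      b x y * (piconeDefect p (u x) (u y) (v x) (v y) +
        piconeDefect p (v x) (v y) (u x) (u y)) := by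
  rw [piconeDefect_add_piconeDefect hp hux huy hvx hvy, adsKernel, adsKernel, ← hb]
  ring

theorem two_mul_adsLHS_sub_adsRHS (hG : IsGraph m b) (hp : 1 ≤ p) (huF : MemF b p K u)
    (hvF : MemF b p K v) (hu : ∀ x ∈ (K : Set X), 0 < u x) (hv : ∀ x ∈ (K : Set X), 0 < v x) :
    2 * (adsLHS m b p K u v - adsRHS b p K u v) =
      ∑ x ∈ K, ∑ y ∈ K, b x y * (piconeDefect p (u x) (u y) (v x) (v y) +
        piconeDefect p (v x) (v y) (u x) (u y)) := by
  rw [adsLHS_sub_adsRHS hG hp huF hvF hu hv, two_mul]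
  nth_rw 2 [Finset.sum_comm]
  simp only [← Finset.sum_add_distrib]
  exact Finset.sum_congr rfl fun x hx => Finset.sum_congr rfl fun y hy =>
    adsKernel_add_adsKernel_swap (by positivity) (hG.weight_symm x y) (hu x hx) (hu y hy)
      (hv x hx) (hv y hy)

theorem weight_mul_piconeDefect_add_nonneg (hG : IsGraph m b) (hp : 1 ≤ p)
    (hu : ∀ x ∈ (K : Set X), 0 < u x) (hv : ∀ x ∈ (K : Set X), 0 < v x) :
    ∀ x ∈ K, ∀ y ∈ K, 0 ≤ b x y * (piconeDefect p (u x) (u y) (v x) (v y) +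
      piconeDefect p (v x) (v y) (u x) (u y)) := fun x hx y hy =>
  mul_nonneg (hG.weight_nonneg x y) <| add_nonneg
    (piconeDefect_nonneg hp (hu x hx).le (hu y hy).le (hv x hx) (hv y hy))
    (piconeDefect_nonneg hp (hv x hx).le (hv y hy).le (hu x hx) (hu y hy))

theorem adsRHS_le_adsLHS (hG : IsGraph m b) (hp : 1 ≤ p) (huF : MemF b p K u)
    (hvF : MemF b p K v) (hu : ∀ x ∈ (K : Set X), 0 < u x) (hv : ∀ x ∈ (K : Set X), 0 < v x) :
    adsRHS b p K u v ≤ adsLHS m b p K u v := by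
  have hdiff := two_mul_adsLHS_sub_adsRHS hG hp huF hvF hu hv
  have hnonneg := Finset.sum_nonneg fun x hx =>
    Finset.sum_nonneg (weight_mul_piconeDefect_add_nonneg hG hp hu hv x hx)
  linarith

theorem div_eq_div_of_adsRHS_eq_adsLHS (hG : IsGraph m b) (hp : 1 < p) (huF : MemF b p K u)
    (hvF : MemF b p K v) (hu : ∀ x ∈ (K : Set X), 0 < u x) (hv : ∀ x ∈ (K : Set X), 0 < v x)
    (heq : adsRHS b p K u v = adsLHS m b p K u v) :
    ∀ x ∈ (K : Set X), ∀ y ∈ (K : Set X), 0 < b x y → u x / v x = u y / v y := by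
  intro x hx y hy hxy
  have hnonneg := weight_mul_piconeDefect_add_nonneg hG hp.le hu hv
  have hsum := two_mul_adsLHS_sub_adsRHS hG hp.le huF hvF hu hv
  rw [heq, sub_self, mul_zero] at hsum
  have hrow := (Finset.sum_eq_zero_iff_of_nonneg fun x hx =>
    Finset.sum_nonneg (hnonneg x hx)).1 hsum.symm x hx
  have hedge := (Finset.sum_eq_zero_iff_of_nonneg (hnonneg x hx)).1 hrow y hy
  by_contra hne
  exact (mul_pos hxy <| add_pos_of_pos_of_nonneg
    (piconeDefect_pos hp (hu x hx).le (hu y hy).le (hv x hx) (hv y hy) hne)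
    (piconeDefect_nonneg hp.le (hv x hx).le (hv y hy).le (hu x hx) (hu y hy))).ne' hedge

theorem exists_eq_mul_of_adsRHS_eq_adsLHS (hG : IsGraph m b) (hp : 1 < p)
    (hK : ConnectedIn b (K : Set X)) (huF : MemF b p K u) (hvF : MemF b p K v)
    (hu : ∀ x ∈ (K : Set X), 0 < u x) (hv : ∀ x ∈ (K : Set X), 0 < v x)
    (heq : adsRHS b p K u v = adsLHS m b p K u v) :
    ∃ C : ℝ, 0 < C ∧ ∀ x ∈ (K : Set X), u x = C * v x := by
  rcases (K : Set X).eq_empty_or_nonempty with hempty | ⟨o, ho⟩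
  · exact ⟨1, one_pos, by simp [hempty]⟩
  · refine ⟨u o / v o, div_pos (hu o ho) (hv o ho), fun x hx => ?_⟩
    rw [← div_eq_iff (hv x hx).ne']
    exact hK.eq_of_forall_adj (f := fun y => u y / v y)
      (div_eq_div_of_adsRHS_eq_adsLHS hG hp huF hvF hu hv heq) hx ho

theorem adsRHS_eq_zero_of_memC {K : Set X} (hu : MemC K u) (hv : MemC K v) :
    adsRHS b p K u v = 0 := by
  rw [adsRHS, ← tsum_zero (α := ℝ) (β := X × X)]
  refine tsum_congr fun z => Set.indicator_apply_eq_zero.2 fun hz => ?_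
  rw [hu z.2 hz.2.1, hv z.2 hz.2.1, zero_div, zero_div, sub_self, mul_zero]

theorem adsLHS_const_mul_left {K : Set X} {C : ℝ} (hC : 0 < C) (hv : ∀ x ∈ K, 0 ≤ v x) :
    adsLHS m b p K (fun x => C * v x) v = 0 := by
  have hzero : ∀ x ∈ K, LOp m b p (fun y => C * v y) x / (C * v x) ^ (p - 1) -
      LOp m b p v x / v x ^ (p - 1) = 0 := fun x hx => by
    rw [LOp_const_mul hC, Real.mul_rpow hC.le (hv x hx),
      mul_div_mul_left _ _ (Real.rpow_pos_of_pos hC _).ne', sub_self]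
  rw [adsLHS, bracket, ← tsum_zero (α := ℝ) (β := X)]
  refine tsum_congr fun x => Set.indicator_apply_eq_zero.2 fun hx => ?_
  simp only [hzero x hx, zero_mul]

theorem adsPair_eq_adsLHS : adsPair m b p K u v = adsLHS m b p K u v := by
  simp only [adsPair, adsLHS, bracket_coe_finset, ← Finset.sum_add_distrib]
  exact Finset.sum_congr rfl fun x _ => by ring

theorem adsPair_nonneg (hG : IsGraph m b) (hp : 1 < p) (huK : MemC (K : Set X) u)
    (hvK : MemC (K : Set X) v) (hu : ∀ x ∈ (K : Set X), 0 < u x)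
    (hv : ∀ x ∈ (K : Set X), 0 < v x) : 0 ≤ adsPair m b p K u v := by
  rw [adsPair_eq_adsLHS, ← adsRHS_eq_zero_of_memC (b := b) (p := p) huK hvK]
  exact adsRHS_le_adsLHS hG hp.le (huK.memF K.finite_toSet hp.ne')
    (hvK.memF K.finite_toSet hp.ne') hu hv

theorem adsPair_eq_zero_iff (hG : IsGraph m b) (hp : 1 < p) (hK : ConnectedIn b (K : Set X))
    (huK : MemC (K : Set X) u) (hvK : MemC (K : Set X) v) (hu : ∀ x ∈ (K : Set X), 0 < u x)
    (hv : ∀ x ∈ (K : Set X), 0 < v x) :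
    adsPair m b p K u v = 0 ↔ ∃ C : ℝ, 0 < C ∧ ∀ x, u x = C * v x := by
  rw [adsPair_eq_adsLHS]
  constructor
  · intro hzero
    obtain ⟨C, hC, huv⟩ := exists_eq_mul_of_adsRHS_eq_adsLHS hG hp hK
      (huK.memF K.finite_toSet hp.ne') (hvK.memF K.finite_toSet hp.ne') hu hv
      ((adsRHS_eq_zero_of_memC huK hvK).trans hzero.symm)
    refine ⟨C, hC, fun x => ?_⟩
    by_cases hx : x ∈ (K : Set X)
    · exact huv x hx
    · rw [huK x hx, hvK x hx, mul_zero]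
  · rintro ⟨C, hC, huv⟩
    rw [funext huv]
    exact adsLHS_const_mul_left hC fun x hx => (hv x hx).le

end AnaneDiazSaa

theorem stmt6_general {X : Type*} (m : X → ℝ) (b : X → X → ℝ) (p : ℝ)
    (hG : IsGraph m b) (hp : 1 < p)
    (K : Set X) (hK : K.Finite) (u₁ u₂ : X → ℝ)
    (hu₁F : MemF b p K u₁) (hu₂F : MemF b p K u₂)
    (hu₁ : ∀ x ∈ K, 0 < u₁ x) (hu₂ : ∀ x ∈ K, 0 < u₂ x) :
    adsRHS b p K u₁ u₂ ≤ adsLHS m b p K u₁ u₂ ∧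
    (ConnectedIn b K → adsRHS b p K u₁ u₂ = adsLHS m b p K u₁ u₂ →
      ∃ C : ℝ, 0 < C ∧ ∀ x ∈ K, u₁ x = C * u₂ x) ∧
    (∀ φ ψ : X → ℝ, MemC K φ → MemC K ψ →
      (∀ x ∈ K, 0 < φ x) → (∀ x ∈ K, 0 < ψ x) →
      0 ≤ adsPair m b p K φ ψ ∧
      (ConnectedIn b K →
        (adsPair m b p K φ ψ = 0 ↔ ∃ C : ℝ, 0 < C ∧ ∀ x, φ x = C * ψ x))) := by
  lift K to Finset X using hK
  exact ⟨adsRHS_le_adsLHS hG hp.le hu₁F hu₂F hu₁ hu₂,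
    fun hconn heq => exists_eq_mul_of_adsRHS_eq_adsLHS hG hp hconn hu₁F hu₂F hu₁ hu₂ heq,
    fun φ ψ hφK hψK hφ hψ => ⟨adsPair_nonneg hG hp hφK hψK hφ hψ,
      fun hconn => adsPair_eq_zero_iff hG hp hconn hφK hψK hφ hψ⟩⟩

theorem stmt6 {X : Type*} [Countable X] [Infinite X]
    (m : X → ℝ) (b : X → X → ℝ) (p : ℝ)
    (hG : IsGraph m b) (hgconn : ConnectedIn b Set.univ) (hp : 1 < p)
    (K : Set X) (hK : K.Finite) (u₁ u₂ : X → ℝ)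
    (hu₁F : MemF b p K u₁) (hu₂F : MemF b p K u₂)
    (hu₁ : ∀ x ∈ K, 0 < u₁ x) (hu₂ : ∀ x ∈ K, 0 < u₂ x) :
    adsRHS b p K u₁ u₂ ≤ adsLHS m b p K u₁ u₂ ∧
    (ConnectedIn b K → adsRHS b p K u₁ u₂ = adsLHS m b p K u₁ u₂ →
      ∃ C : ℝ, 0 < C ∧ ∀ x ∈ K, u₁ x = C * u₂ x) ∧
    (∀ φ ψ : X → ℝ, MemC K φ → MemC K ψ →
      (∀ x ∈ K, 0 < φ x) → (∀ x ∈ K, 0 < ψ x) →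
      0 ≤ adsPair m b p K φ ψ ∧
      (ConnectedIn b K →
        (adsPair m b p K φ ψ = 0 ↔ ∃ C : ℝ, 0 < C ∧ ∀ x, φ x = C * ψ x))) := by
  exact stmt6_general m b p hG hp K hK u₁ u₂ hu₁F hu₂F hu₁ hu₂
end
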